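/- arXiv:2310.13472 — 5 statements merged into one kernel-verified Lean document; each statement's English description precedes it below -/
import Mathlib

section
/- Let Γ be a group such that every finite-index subgroup Λ of Γ has the following property: every nontrivial normal subgroup of Λ has finite index in Λ. Then either Γ is residually finite, or Γ contains a simple subgroup of finite index (i.e. Γ is virtually simple). -/
/-!
The finite residual `K` of `Γ`, the intersection of all finite-index subgroups, is characteristic.
If it is nontrivial, it has finite index, and is then the smallest finite-index subgroup of `Γ`.
A finite-index subgroup of `K` has finite index in `Γ`, hence is all of `K`. Since nontrivial
normal subgroups of `K` have finite index in `K`, the group `K` is simple.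
-/

/-- The finite residual of `G`: the intersection of its finite-index subgroups. Normality of the
subgroups in the definition is harmless by `finiteResidual_le`, and makes
`finiteResidual G = ⊥` the definition of `Group.ResiduallyFinite G`. -/
def finiteResidual (G : Type*) [Group G] : Subgroup G :=
  ⨅ N : FiniteIndexNormalSubgroup G, N.toSubgroup

/-- The conclusion of Margulis' normal subgroup theorem: every nontrivial normal subgroup has
finite index. Finite groups are allowed, so an infinite group has this property exactly when it is
just infinite. -/
def NormalSubgroupProperty (G : Type*) [Group G] : Prop :=
  ∀ N : Subgroup G, N.Normal → N ≠ ⊥ → N.FiniteIndex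

section FiniteResidual

variable {G G' : Type*} [Group G] [Group G']

theorem finiteIndex_map (f : G →* G') [f.range.FiniteIndex] (H : Subgroup G) [H.FiniteIndex] :
    (H.map f).FiniteIndex := by
  have : (H ⊔ f.ker).FiniteIndex := Subgroup.finiteIndex_of_le le_sup_left
  rw [Subgroup.finiteIndex_iff, Subgroup.index_map]
  exact mul_ne_zero Subgroup.FiniteIndex.index_ne_zero Subgroup.FiniteIndex.index_ne_zero

theorem finiteResidual_le (H : Subgroup G) [H.FiniteIndex] : finiteResidual G ≤ H :=
  (iInf_le _ (FiniteIndexNormalSubgroup.ofSubgroup H.normalCore)).trans H.normalCore_le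

theorem finiteResidual_le_comap (f : G →* G') :
    finiteResidual G ≤ (finiteResidual G').comap f := by
  simp only [finiteResidual, Subgroup.comap_iInf]
  exact le_iInf fun N ↦ iInf_le _ (N.comap f)

instance finiteResidual_characteristic : (finiteResidual G).Characteristic :=
  Subgroup.characteristic_iff_le_comap.mpr fun φ ↦ finiteResidual_le_comap φ.toMonoidHom

theorem eq_top_of_finiteIndex_finiteResidual [(finiteResidual G).FiniteIndex]
    (N : Subgroup (finiteResidual G)) [N.FiniteIndex] : N = ⊤ := by
  have : (finiteResidual G).subtype.range.FiniteIndex := by rwa [Subgroup.range_subtype]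
  have : (N.map (finiteResidual G).subtype).FiniteIndex := finiteIndex_map _ N
  rw [eq_top_iff, ← Subgroup.map_subtype_le_map_subtype]
  exact (Subgroup.map_subtype_le ⊤).trans (finiteResidual_le _)

namespace NormalSubgroupProperty

theorem of_surjective (hG : NormalSubgroupProperty G) {f : G →* G'}
    (hf : Function.Surjective f) : NormalSubgroupProperty G' := by
  intro N hN hN_ne
  have hcomap_ne : N.comap f ≠ ⊥ := fun hcomap ↦ hN_ne <| by
    rw [← Subgroup.map_comap_eq_self_of_surjective hf N, hcomap, Subgroup.map_bot]
  have hcomap := (hG (N.comap f) (hN.comap f) hcomap_ne).index_ne_zero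
  exact ⟨by rwa [N.index_comap_of_surjective hf] at hcomap⟩

theorem isSimpleGroup [Nontrivial G] (hG : NormalSubgroupProperty G)
    (htop : ∀ N : Subgroup G, N.Normal → N.FiniteIndex → N = ⊤) : IsSimpleGroup G where
  eq_bot_or_eq_top_of_normal N hN := or_iff_not_imp_left.mpr fun hN_ne ↦
    htop N hN (hG N hN hN_ne)

end NormalSubgroupProperty

theorem isSimpleGroup_finiteResidual [(finiteResidual G).FiniteIndex]
    (hne : finiteResidual G ≠ ⊥) (hK : NormalSubgroupProperty (finiteResidual G)) :
    IsSimpleGroup (finiteResidual G) :=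
  have := (finiteResidual G).nontrivial_iff_ne_bot.mpr hne
  hK.isSimpleGroup fun N _ _ ↦ eq_top_of_finiteIndex_finiteResidual N

end FiniteResidual

theorem stmt_0_general (Γ : Type*) [Group Γ]
    (h : ∀ Λ : Subgroup Γ, Λ.Characteristic → Λ.FiniteIndex → NormalSubgroupProperty Λ) :
    Group.ResiduallyFinite Γ ∨
      ∃ H : Subgroup Γ, H.Characteristic ∧ H.FiniteIndex ∧ IsSimpleGroup H := by
  refine or_iff_not_imp_left.mpr fun hΓ ↦ ?_
  have hne : finiteResidual Γ ≠ ⊥ := mt Group.residuallyFinite_def.mpr hΓ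
  have hnsp : NormalSubgroupProperty Γ :=
    (h ⊤ inferInstance inferInstance).of_surjective
      (f := (Subgroup.topEquiv : (⊤ : Subgroup Γ) ≃* Γ).toMonoidHom) Subgroup.topEquiv.surjective
  have hfin : (finiteResidual Γ).FiniteIndex := hnsp _ inferInstance hne
  exact ⟨finiteResidual Γ, inferInstance, hfin,
    isSimpleGroup_finiteResidual hne (h _ inferInstance hfin)⟩

/-- If every finite-index subgroup `Λ` of `Γ` has the property that every nontrivial
normal subgroup of `Λ` has finite index in `Λ`, then `Γ` is residually finite or
virtually simple. -/
theorem stmt_0 (Γ : Type*) [Group Γ]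
    (h : ∀ Λ : Subgroup Γ, Λ.FiniteIndex →
      ∀ N : Subgroup Λ, N.Normal → N ≠ ⊥ → N.FiniteIndex) :
    (∀ g : Γ, g ≠ 1 → ∃ N : Subgroup Γ, N.Normal ∧ N.FiniteIndex ∧ g ∉ N) ∨
    (∃ H : Subgroup Γ, H.FiniteIndex ∧ IsSimpleGroup H) := by
  refine (stmt_0_general Γ fun Λ _ ↦ h Λ).imp (fun hΓ g hg ↦ ?_) fun ⟨H, _, hH⟩ ↦ ⟨H, hH⟩
  obtain ⟨N, hgN⟩ :=
    Group.residuallyFinite_iff_exists_finiteIndexNormalSubgroup.mp hΓ g hg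
  exact ⟨N, inferInstance, inferInstance, hgN⟩
end

section
/- Let G be a group acting by homeomorphisms on topological spaces Z and Y, with Y Hausdorff. Let p : Z → Y be a continuous, G-equivariant, surjective map. If the action of G on Z is topologically 2-minimal, then either Y has at most one point or p is injective (hence bijective). -/
/-!
The kernel `{(x, y) | p x = p y}` of `p` is an invariant equivalence relation, and it is closed
because the target is Hausdorff. If it contains an off-diagonal pair then it contains the dense
orbit of that pair, so it is all of `Z × Z` and `p` is constant.
-/

open Set

/-- Topological 2-minimality: the diagonal orbit of every pair of distinct points of `Z` is dense
in `Z × Z`. Here `G` is any family of self-maps of `Z`. -/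
def IsTopologicallyTwoMinimal (G Z : Type*) [TopologicalSpace Z] [SMul G Z] : Prop :=
  ∀ x y : Z, x ≠ y → Dense (range fun g : G => (g • x, g • y))

theorem IsTopologicallyTwoMinimal.setoid_eq_bot_or_eq_top {G Z : Type*} [TopologicalSpace Z]
    [SMul G Z] (hmin : IsTopologicallyTwoMinimal G Z) (r : Setoid Z)
    (hclosed : IsClosed {w : Z × Z | r w.1 w.2})
    (hinv : ∀ (g : G) (x y : Z), r x y → r (g • x) (g • y)) :
    r = ⊥ ∨ r = ⊤ := by
  refine or_iff_not_imp_left.mpr fun hr => ?_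
  obtain ⟨x, y, hxy, hne⟩ : ∃ x y, r x y ∧ x ≠ y := by
    by_contra! hdiag
    exact hr (eq_bot_iff.mpr fun x y => hdiag x y)
  have horbit : (range fun g : G => (g • x, g • y)) ⊆ {w : Z × Z | r w.1 w.2} :=
    range_subset_iff.mpr fun g => hinv g x y hxy
  exact Setoid.eq_top_iff.mpr fun u v => closure_minimal horbit hclosed (hmin x y hne (u, v))

theorem stmt_1_general {G Z Y : Type*} [TopologicalSpace Z] [TopologicalSpace Y] [T2Space Y]
    [SMul G Z] [SMul G Y] (hmin : IsTopologicallyTwoMinimal G Z)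
    (p : Z → Y) (hp : Continuous p) (hequiv : ∀ (g : G) (z : Z), p (g • z) = g • p z) :
    (range p).Subsingleton ∨ Function.Injective p := by
  have hclosed : IsClosed {w : Z × Z | Setoid.ker p w.1 w.2} :=
    isClosed_eq (hp.comp continuous_fst) (hp.comp continuous_snd)
  have hinv (g : G) (x y : Z) (hxy : p x = p y) : p (g • x) = p (g • y) := by
    rw [hequiv, hequiv, hxy]
  rcases hmin.setoid_eq_bot_or_eq_top (Setoid.ker p) hclosed hinv with hbot | htop
  · exact Or.inr (Setoid.injective_iff_ker_bot p |>.mpr hbot)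
  · left
    rintro _ ⟨u, rfl⟩ _ ⟨v, rfl⟩
    exact Setoid.eq_top_iff.mp htop u v

/-- If a group `G` acts by homeomorphisms on `Z` and `Y` (with `Y` Hausdorff), acts
topologically 2-minimally on `Z`, and `p : Z → Y` is a continuous equivariant surjection,
then either `Y` has at most one point or `p` is injective. -/
theorem stmt_1 {G Z Y : Type*} [Group G] [TopologicalSpace Z] [TopologicalSpace Y]
    [T2Space Y] [MulAction G Z] [MulAction G Y]
    (hZcont : ∀ g : G, Continuous fun z : Z => g • z)
    (hYcont : ∀ g : G, Continuous fun y : Y => g • y)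
    (p : Z → Y) (hp : Continuous p)
    (hequiv : ∀ (g : G) (z : Z), p (g • z) = g • p z)
    (hsurj : Function.Surjective p)
    (hmin : ∀ x y : Z, x ≠ y → Dense (Set.range fun g : G => (g • x, g • y))) :
    Subsingleton Y ∨ Function.Injective p := by
  simpa only [hsurj.range_eq, subsingleton_univ_iff] using stmt_1_general hmin p hp hequiv
end

section
/- Let T be a finite nonempty tree (a finite connected acyclic simple graph), and let f be a function from the vertices of T to ℤ such that: (i) |f(x) − f(y)| = 1 whenever x and y are adjacent vertices; and (ii) f(a) + f(c) ≥ 2·f(b) whenever b is a vertex adjacent to two distinct vertices a and c (this is equivalent to f being convex in restriction to every geodesic segment of T). Then there exist a vertex x of T and an integer t such that f(z) = t + dist(x, z) for every vertex z of T, where dist denotes the combinatorial (shortest-path) distance. -/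
/-!
Convexity makes the increments of `f` nondecreasing along every path. At a vertex `x` where `f` is
minimal each step away from `x` increases `f` by `1`, so along a geodesic from `x` to `z` the total
increment is at least `dist x z`; since no step increases `f` by more than `1`, it is also at most
`dist x z`.
-/

open SimpleGraph

section PathIncrements

variable {V M : Type*} {G : SimpleGraph V} [AddCommGroup M] [PartialOrder M] [IsOrderedAddMonoid M]
  {f : V → M}

/-- Convexity of a vertex function along the paths of a graph: on every path `a, b, c` the second
increment is at least the first. Stating it with increments avoids multiplying by `2` and makes
sense in any ordered group. -/
def ConvexAlongPaths (G : SimpleGraph V) (f : V → M) : Prop :=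
  ∀ ⦃a b c : V⦄, G.Adj a b → G.Adj b c → a ≠ c → f b - f a ≤ f c - f b

theorem ConvexAlongPaths.length_nsmul_sub_le (hf : ConvexAlongPaths G f) {u v w : V}
    (h : G.Adj u v) (p : G.Walk v w) (hp : (Walk.cons h p).IsPath) :
    (Walk.cons h p).length • (f v - f u) ≤ f w - f u := by
  induction p generalizing u with
  | nil => simp
  | @cons v v' w h' q ih =>
    obtain ⟨hq, hu⟩ := (Walk.cons_isPath_iff h _).mp hp
    have u_ne_v' : u ≠ v' := by
      rintro rfl
      simp at hu
    have increment_le : f v - f u ≤ f v' - f v := hf h h' u_ne_v'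
    calc (Walk.cons h (Walk.cons h' q)).length • (f v - f u)
        = (Walk.cons h' q).length • (f v - f u) + (f v - f u) := succ_nsmul _ _
      _ ≤ (Walk.cons h' q).length • (f v' - f v) + (f v - f u) := by gcongr
      _ ≤ (f w - f v) + (f v - f u) := by gcongr; exact ih h' hq
      _ = f w - f u := sub_add_sub_cancel _ _ _

theorem sub_le_walk_length_nsmul {c : M} (hf : ∀ x y : V, G.Adj x y → f y - f x ≤ c) {v w : V}
    (p : G.Walk v w) : f w - f v ≤ p.length • c := by
  induction p with
  | nil => simp
  | @cons u v w h q ih =>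
    calc f w - f u = (f w - f v) + (f v - f u) := (sub_add_sub_cancel _ _ _).symm
      _ ≤ q.length • c + c := add_le_add ih (hf u v h)
      _ = (Walk.cons h q).length • c := (succ_nsmul _ _).symm

end PathIncrements

theorem ConvexAlongPaths.eq_add_dist_nsmul_of_forall_adj_le {V M : Type*} {G : SimpleGraph V}
    [AddCommGroup M] [LinearOrder M] [IsOrderedAddMonoid M] {f : V → M} {c : M}
    (hf : ConvexAlongPaths G f) (hG : G.Connected)
    (hstep : ∀ x y : V, G.Adj x y → |f x - f y| = c) {x : V}
    (hx : ∀ y : V, G.Adj x y → f x ≤ f y) (z : V) : f z = f x + G.dist x z • c := by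
  obtain ⟨p, hp, hlength⟩ := hG.exists_path_of_dist x z
  rw [← hlength, ← sub_eq_iff_eq_add']
  apply le_antisymm
  · exact sub_le_walk_length_nsmul
      (fun u v huv => (le_abs_self _).trans (hstep v u huv.symm).le) p
  · cases p with
    | nil => simp
    | @cons _ y _ h q =>
      have first_increment : f y - f x = c := by
        rw [← hstep y x h.symm, abs_of_nonneg (sub_nonneg.mpr (hx y h))]
      simpa only [first_increment] using hf.length_nsmul_sub_le h q hp

theorem stmt_3_general {V : Type*} (G : SimpleGraph V) (hG : G.Connected) (f : V → ℤ)
    (hbdd : BddBelow (Set.range f))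
    (h1 : ∀ x y : V, G.Adj x y → |f x - f y| = 1)
    (h2 : ∀ a b c : V, G.Adj b a → G.Adj b c → a ≠ c → f a + f c ≥ 2 * f b) :
    ∃ (x : V) (t : ℤ), ∀ z : V, f z = t + (G.dist x z : ℤ) := by
  have := hG.nonempty
  have hconvex : ConvexAlongPaths G f := fun a b c hab hbc hac => by
    linarith [h2 a b c hab.symm hbc hac]
  obtain ⟨x, hx⟩ : sInf (Set.range f) ∈ Set.range f := Int.csInf_mem (Set.range_nonempty f) hbdd
  have x_min (y : V) : f x ≤ f y := hx ▸ csInf_le hbdd (Set.mem_range_self y)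
  refine ⟨x, f x, fun z => ?_⟩
  simpa only [nsmul_one] using
    hconvex.eq_add_dist_nsmul_of_forall_adj_le hG h1 (fun y _ => x_min y) z

/-- On a finite nonempty tree, an integer-valued function that changes by exactly `1`
along each edge and is convex on geodesic segments is of the form
`z ↦ t + dist x z` for some vertex `x` and integer `t`. -/
theorem stmt_3 {V : Type*} [Fintype V] [Nonempty V] (T : SimpleGraph V) (hT : T.IsTree)
    (f : V → ℤ)
    (h1 : ∀ x y : V, T.Adj x y → |f x - f y| = 1)
    (h2 : ∀ a b c : V, T.Adj b a → T.Adj b c → a ≠ c → f a + f c ≥ 2 * f b) :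
    ∃ (x : V) (t : ℤ), ∀ z : V, f z = t + (T.dist x z : ℤ) :=
  stmt_3_general T hT.connected f (Set.finite_range f).bddBelow h1 h2
end

section
/- Fix an integer d ≥ 1 and let X be a d-regular tree. Let Y and Y' be finite nonempty trees all of whose vertices have degree at most d, and let i : Y' → Y be an isometric embedding. Then for every isometric embedding α : Y' → X, the set { β : Y → X | β is an isometric embedding and β ∘ i = α } is finite and nonempty, and its cardinality does not depend on the choice of α. -/
/-- An isometric embedding of simple graphs: an injective map on vertices preserving
the combinatorial (shortest-path) distance. -/
def IsIsomEmb {A B : Type*} (G : SimpleGraph A) (H : SimpleGraph B) (f : A → B) : Prop :=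
  Function.Injective f ∧ ∀ x y : A, H.dist (f x) (f y) = G.dist x y

/-!
Enlarge a subtree of `Y` one adjacent vertex at a time. If `v ∉ S` is adjacent to `u ∈ S`, then the
geodesics from `v` into the subtree `S` all pass through `u`, so an isometric embedding of `S` into
`X` extends to `insert v S` exactly by sending `v` to a neighbor of the image of `u` not yet used.
There are `d - k` such neighbors, where `k` is the number of neighbors of `u` in `S`. This number
does not depend on the embedding, and it is positive because `u` has at most `d` neighbors, one of
which is `v`.
-/

open SimpleGraph

theorem eqOn_update_of_notMem {V W : Type*} [DecidableEq V] {S : Set V} {v : V} (hv : v ∉ S)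
    {f : V → W} {w : W} : Set.EqOn (Function.update f v w) f S := fun _ hx =>
  Function.update_of_ne (ne_of_mem_of_not_mem hx hv) w f

section ConnectedSubsets

variable {V : Type*} {G : SimpleGraph V} {S : Set V} {u v x : V}

theorem length_eq_dist_of_isPath (hG : G.IsAcyclic) {p : G.Walk u v} (hp : p.IsPath) :
    p.length = G.dist u v := by
  obtain ⟨q, hq, hlen⟩ := p.reachable.exists_path_of_dist
  have hpq : p = q :=
    congrArg Subtype.val ((hG.subsingleton_path u v).elim ⟨p, hp⟩ ⟨q, hq⟩)
  rw [hpq, hlen]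

theorem dist_eq_dist_add_one_of_preconnected_induce (hG : G.IsAcyclic)
    (hS : (G.induce S).Preconnected) (hu : u ∈ S) (hv : v ∉ S) (huv : G.Adj u v) (hx : x ∈ S) :
    G.dist x v = G.dist x u + 1 := by
  obtain ⟨p, hp⟩ := (hS ⟨x, hx⟩ ⟨u, hu⟩).exists_isPath
  let q : G.Walk x u := p.map (Embedding.induce S).toHom
  have hq : q.IsPath := hp.map Subtype.val_injective
  have hvq : v ∉ q.support := by
    intro hmem
    obtain ⟨y, -, rfl⟩ := List.mem_map.1 (Walk.support_map _ p ▸ hmem)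
    exact hv y.2
  rw [← length_eq_dist_of_isPath hG (hq.concat hvq huv), ← length_eq_dist_of_isPath hG hq,
    Walk.length_concat]

theorem connected_induce_insert (hS : (G.induce S).Preconnected) (hu : u ∈ S) (huv : G.Adj u v) :
    (G.induce (insert v S)).Connected := by
  rw [← Set.union_singleton]
  exact connected_induce_union hS Preconnected.of_subsingleton hu rfl huv

theorem connected_induce_range_hom {W : Type*} {H : SimpleGraph W} (hG : G.Connected) (f : G →g H) :
    (H.induce (Set.range f)).Connected :=
  hG.map ⟨Set.rangeFactorization f, fun h => f.map_adj h⟩ Set.rangeFactorization_surjective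

@[elab_as_elim]
theorem connected_induce_induction [Finite V] (hG : G.Connected)
    {P : ∀ S : Set V, (G.induce S).Connected → Prop}
    (univ : P Set.univ ((induceUnivIso G).connected_iff.2 hG))
    (insert : ∀ (S : Set V) (u v : V) (hS : (G.induce S).Connected) (hu : u ∈ S), v ∉ S →
      ∀ huv : G.Adj u v,
        P (insert v S) (connected_induce_insert hS.preconnected hu huv) → P S hS)
    (S : Set V) (hS : (G.induce S).Connected) : P S hS := by
  induction S using WellFoundedGT.induction with
  | ind S ih =>
    rcases eq_or_ne S Set.univ with rfl | hne
    · exact univ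
    obtain ⟨y, hy⟩ := (Set.ne_univ_iff_exists_notMem S).1 hne
    obtain ⟨⟨x, hx⟩⟩ := hS.nonempty
    obtain ⟨p⟩ := hG x y
    obtain ⟨⟨⟨u, v⟩, huv⟩, -, hu, hv⟩ := p.exists_boundary_dart S hx hy
    exact insert S u v hS hu hv huv (ih _ (Set.ssubset_insert hv) _)

theorem ncard_neighborSet_eq_degree [Fintype (G.neighborSet u)] :
    (G.neighborSet u).ncard = G.degree u := by
  rw [← card_neighborSet_eq_degree, Set.ncard_eq_toFinset_card', Set.toFinset_card]

theorem ncard_neighborSet_inter_lt_degree [Fintype (G.neighborSet u)] (hv : v ∉ S)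
    (huv : G.Adj u v) : (G.neighborSet u ∩ S).ncard < G.degree u := by
  rw [← ncard_neighborSet_eq_degree]
  exact Set.ncard_lt_ncard ⟨Set.inter_subset_left, fun h => hv (h huv).2⟩

end ConnectedSubsets

section IsometricEmbeddings

variable {V W : Type*} {G : SimpleGraph V} {H : SimpleGraph W}

theorem IsIsomEmb.adj_iff {f : V → W} (hf : IsIsomEmb G H f) {x y : V} :
    H.Adj (f x) (f y) ↔ G.Adj x y := by
  rw [← dist_eq_one_iff_adj, hf.2, dist_eq_one_iff_adj]

theorem IsIsomEmb.connected_induce_range {f : V → W} (hf : IsIsomEmb G H f) (hG : G.Connected) :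
    (H.induce (Set.range f)).Connected :=
  connected_induce_range_hom hG ⟨f, hf.adj_iff.2⟩

/-- Isometric embeddings of a vertex set `S`, measured in the distance of the whole graph. The
embedding is encoded as a total map whose values outside `S` are irrelevant. -/
def IsIsomEmbOn (G : SimpleGraph V) (H : SimpleGraph W) (S : Set V) (f : V → W) : Prop :=
  S.InjOn f ∧ ∀ x ∈ S, ∀ y ∈ S, H.dist (f x) (f y) = G.dist x y

theorem isIsomEmbOn_univ {f : V → W} : IsIsomEmbOn G H Set.univ f ↔ IsIsomEmb G H f := by
  simp [IsIsomEmbOn, IsIsomEmb, Set.injOn_univ]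

theorem IsIsomEmb.isIsomEmbOn_range {U : Type*} {F : SimpleGraph U} {i : U → V} {f : V → W}
    (hi : IsIsomEmb F G i) (hf : IsIsomEmb F H (f ∘ i)) : IsIsomEmbOn G H (Set.range i) f := by
  refine ⟨hf.1.injOn_range, ?_⟩
  rintro _ ⟨a, rfl⟩ _ ⟨b, rfl⟩
  exact (hf.2 a b).trans (hi.2 a b).symm

namespace IsIsomEmbOn

variable {S : Set V} {f : V → W} {u v : V}

theorem adj_iff (hf : IsIsomEmbOn G H S f) {x y : V} (hx : x ∈ S) (hy : y ∈ S) :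
    H.Adj (f x) (f y) ↔ G.Adj x y := by
  rw [← dist_eq_one_iff_adj, hf.2 x hx y hy, dist_eq_one_iff_adj]

theorem connected_induce_image (hf : IsIsomEmbOn G H S f) (hS : (G.induce S).Connected) :
    (H.induce (f '' S)).Connected := by
  rw [Set.image_eq_range]
  exact connected_induce_range_hom hS ⟨fun x => f x, fun {x y} h => (hf.adj_iff x.2 y.2).2 h⟩

theorem image_neighborSet_inter (hf : IsIsomEmbOn G H S f) (hu : u ∈ S) :
    f '' (G.neighborSet u ∩ S) = H.neighborSet (f u) ∩ f '' S := by
  ext w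
  constructor
  · rintro ⟨x, ⟨hux, hx⟩, rfl⟩
    exact ⟨(hf.adj_iff hu hx).2 hux, x, hx, rfl⟩
  · rintro ⟨hux, x, hx, rfl⟩
    exact ⟨x, ⟨(hf.adj_iff hu hx).1 hux, hx⟩, rfl⟩

theorem ncard_neighborSet_sdiff_image [Fintype (H.neighborSet (f u))] (hf : IsIsomEmbOn G H S f)
    (hu : u ∈ S) :
    (H.neighborSet (f u) \ f '' S).ncard = H.degree (f u) - (G.neighborSet u ∩ S).ncard := by
  have hinj : Set.InjOn f (G.neighborSet u ∩ S) := hf.1.mono Set.inter_subset_right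
  rw [← Set.sdiff_self_inter, Set.ncard_sdiff Set.inter_subset_left (Set.toFinite _),
    ncard_neighborSet_eq_degree, ← hf.image_neighborSet_inter hu, hinj.ncard_image]

theorem update [DecidableEq V] (hG : G.IsAcyclic) (hH : H.IsAcyclic) (hS : (G.induce S).Connected)
    (hf : IsIsomEmbOn G H S f) (hu : u ∈ S) (hv : v ∉ S) (huv : G.Adj u v) {w : W}
    (hw : w ∈ H.neighborSet (f u) \ f '' S) :
    IsIsomEmbOn G H (insert v S) (Function.update f v w) := by
  have hupdate : Set.EqOn (Function.update f v w) f S := eqOn_update_of_notMem hv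
  have hdist : ∀ x ∈ S, H.dist (f x) w = G.dist x v := fun x hx => by
    rw [dist_eq_dist_add_one_of_preconnected_induce hG hS.preconnected hu hv huv hx,
      dist_eq_dist_add_one_of_preconnected_induce hH (hf.connected_induce_image hS).preconnected
        (Set.mem_image_of_mem f hu) hw.2 hw.1 (Set.mem_image_of_mem f hx), hf.2 x hx u hu]
  constructor
  · rw [Set.injOn_insert hv, hupdate.injOn_iff, hupdate.image_eq, Function.update_self]
    exact ⟨hf.1, hw.2⟩
  · rintro x (rfl | hx) y (rfl | hy)
    · simp
    · rw [Function.update_self, hupdate hy, dist_comm, hdist y hy, dist_comm]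
    · rw [Function.update_self, hupdate hx, hdist x hx]
    · rw [hupdate hx, hupdate hy, hf.2 x hx y hy]

end IsIsomEmbOn

end IsometricEmbeddings

section Extensions

variable {V W : Type*} {G : SimpleGraph V} {H : SimpleGraph W} {S : Set V} {γ : V → W} {u v : V}

/-- The isometric embeddings of the whole graph `G` into `H` that agree with `γ` on `S`. -/
def isomExtensions (G : SimpleGraph V) (H : SimpleGraph W) (S : Set V) (γ : V → W) :
    Set (V → W) :=
  {β | IsIsomEmb G H β ∧ Set.EqOn β γ S}

theorem isomExtensions_range {U : Type*} (i : U → V) :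
    isomExtensions G H (Set.range i) γ = {β | IsIsomEmb G H β ∧ β ∘ i = γ ∘ i} := by
  simp only [isomExtensions, Set.eqOn_range]

theorem isomExtensions_univ (hγ : IsIsomEmb G H γ) : isomExtensions G H Set.univ γ = {γ} := by
  ext β
  simp only [isomExtensions, Set.eqOn_univ, Set.mem_ofPred_eq, Set.mem_singleton_iff]
  exact ⟨And.right, fun h => ⟨h ▸ hγ, h⟩⟩

theorem mem_isomExtensions_insert_update [DecidableEq V] (hv : v ∉ S) {w : W} {β : V → W} :
    β ∈ isomExtensions G H (insert v S) (Function.update γ v w) ↔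
      β ∈ isomExtensions G H S γ ∧ β v = w := by
  have hupdate : Set.EqOn (Function.update γ v w) γ S := eqOn_update_of_notMem hv
  have hEqOn : Set.EqOn β (Function.update γ v w) S ↔ Set.EqOn β γ S :=
    ⟨fun h => h.trans hupdate, fun h => h.trans hupdate.symm⟩
  simp only [isomExtensions, Set.mem_ofPred_eq, Set.insert_eq, Set.eqOn_union, Set.eqOn_singleton,
    Function.update_self, hEqOn]
  tauto

theorem isomExtensions_eq_biUnion [DecidableEq V] (hu : u ∈ S) (hv : v ∉ S) (huv : G.Adj u v) :
    isomExtensions G H S γ = ⋃ w ∈ H.neighborSet (γ u) \ γ '' S,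
      isomExtensions G H (insert v S) (Function.update γ v w) := by
  ext β
  simp only [Set.mem_iUnion, mem_isomExtensions_insert_update hv, exists_prop]
  refine ⟨fun hβ => ⟨β v, ⟨?_, ?_⟩, hβ, rfl⟩, fun ⟨_, _, hβ, _⟩ => hβ⟩
  · rw [mem_neighborSet, ← hβ.2 hu]
    exact hβ.1.adj_iff.2 huv
  · rw [← hβ.2.image_eq, hβ.1.1.mem_set_image]
    exact hv

theorem ncard_isomExtensions_eq_mul [DecidableEq V] [Fintype (H.neighborSet (γ u))]
    (hγ : IsIsomEmbOn G H S γ) (hu : u ∈ S) (hv : v ∉ S) (huv : G.Adj u v) {N : ℕ} (hN : N ≠ 0)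
    (h : ∀ w ∈ H.neighborSet (γ u) \ γ '' S,
      (isomExtensions G H (insert v S) (Function.update γ v w)).ncard = N) :
    (isomExtensions G H S γ).ncard = (H.degree (γ u) - (G.neighborSet u ∩ S).ncard) * N := by
  have hfinite : (H.neighborSet (γ u) \ γ '' S).Finite := (Set.toFinite _).sdiff
  have hdisjoint : (H.neighborSet (γ u) \ γ '' S).PairwiseDisjoint fun w =>
      isomExtensions G H (insert v S) (Function.update γ v w) := by
    refine fun w _ w' _ hne => Set.disjoint_left.2 fun β hβ hβ' => hne ?_
    rw [mem_isomExtensions_insert_update hv] at hβ hβ'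
    exact hβ.2.symm.trans hβ'.2
  rw [isomExtensions_eq_biUnion hu hv huv, hfinite.ncard_biUnion
      (fun w hw => Set.finite_of_ncard_ne_zero (h w hw ▸ hN)) hdisjoint,
    finsum_mem_congr rfl h, finsum_mem_eq_finite_toFinset_sum _ hfinite, Finset.sum_const,
    ← Set.ncard_eq_toFinset_card _ hfinite, hγ.ncard_neighborSet_sdiff_image hu, smul_eq_mul]

theorem exists_ncard_isomExtensions_eq [Finite V] [G.LocallyFinite] [H.LocallyFinite] {d : ℕ}
    (hG : G.IsTree) (hdeg : ∀ v, G.degree v ≤ d) (hH : H.IsAcyclic)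
    (hreg : H.IsRegularOfDegree d) (hS : (G.induce S).Connected) :
    ∃ N ≠ 0, ∀ γ, IsIsomEmbOn G H S γ → (isomExtensions G H S γ).ncard = N := by
  classical
  induction S, hS using connected_induce_induction hG.connected with
  | univ =>
    refine ⟨1, one_ne_zero, fun γ hγ => ?_⟩
    rw [isomExtensions_univ (isIsomEmbOn_univ.1 hγ), Set.ncard_singleton]
  | insert S u v hS hu hv huv ih =>
    obtain ⟨N, hN, hcard⟩ := ih
    have hlt : (G.neighborSet u ∩ S).ncard < d :=
      (ncard_neighborSet_inter_lt_degree hv huv).trans_le (hdeg u)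
    refine ⟨(d - (G.neighborSet u ∩ S).ncard) * N,
      mul_ne_zero (Nat.sub_ne_zero_of_lt hlt) hN, fun γ hγ => ?_⟩
    rw [ncard_isomExtensions_eq_mul hγ hu hv huv hN fun w hw =>
      hcard _ (hγ.update hG.isAcyclic hH hS hu hv huv hw), hreg (γ u)]

end Extensions

theorem stmt_4_general {W VY VY' : Type*} {d : ℕ} {X : SimpleGraph W} (hX : X.IsAcyclic)
    [X.LocallyFinite] (hXreg : X.IsRegularOfDegree d) [Finite VY] {Y : SimpleGraph VY}
    (hY : Y.IsTree) [Y.LocallyFinite] (hYdeg : ∀ v : VY, Y.degree v ≤ d) {Y' : SimpleGraph VY'}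
    (hY' : Y'.Connected) {i : VY' → VY} (hi : IsIsomEmb Y' Y i) :
    ∃ N ≠ 0, ∀ α : VY' → W, IsIsomEmb Y' X α →
      {β : VY → W | IsIsomEmb Y X β ∧ β ∘ i = α}.ncard = N := by
  obtain ⟨N, hN, hcard⟩ :=
    exists_ncard_isomExtensions_eq hY hYdeg hX hXreg (hi.connected_induce_range hY')
  refine ⟨N, hN, fun α hα => ?_⟩
  have : Nonempty W := hY'.nonempty.map α
  obtain ⟨γ, rfl⟩ := hi.1.surjective_comp_right α
  rw [← isomExtensions_range, hcard γ (hi.isIsomEmbOn_range hα)]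

/-- A `d`-regular tree is `P`-symmetric for `P` = "tree of degrees bounded by `d`":
given finite nonempty trees `Y', Y` of max degree `≤ d`, an isometric embedding
`i : Y' → Y`, and an isometric embedding `α : Y' → X`, the set of isometric embeddings
`β : Y → X` with `β ∘ i = α` is finite and nonempty, of cardinality independent of `α`. -/
theorem stmt_4 {W VY VY' : Type*} (d : ℕ) (hd : 1 ≤ d)
    (X : SimpleGraph W) (hXtree : X.IsTree) [X.LocallyFinite]
    (hXreg : X.IsRegularOfDegree d)
    [Fintype VY] [Nonempty VY] (Y : SimpleGraph VY) (hYtree : Y.IsTree)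
    [Y.LocallyFinite] (hYdeg : ∀ v : VY, Y.degree v ≤ d)
    [Fintype VY'] [Nonempty VY'] (Y' : SimpleGraph VY') (hY'tree : Y'.IsTree)
    [Y'.LocallyFinite] (hY'deg : ∀ v : VY', Y'.degree v ≤ d)
    (i : VY' → VY) (hi : IsIsomEmb Y' Y i) :
    (∀ α : VY' → W, IsIsomEmb Y' X α →
      {β : VY → W | IsIsomEmb Y X β ∧ β ∘ i = α}.Finite ∧
      {β : VY → W | IsIsomEmb Y X β ∧ β ∘ i = α}.Nonempty) ∧
    (∀ α α' : VY' → W, IsIsomEmb Y' X α → IsIsomEmb Y' X α' →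
      {β : VY → W | IsIsomEmb Y X β ∧ β ∘ i = α}.ncard =
      {β : VY → W | IsIsomEmb Y X β ∧ β ∘ i = α'}.ncard) := by
  obtain ⟨N, hN, hcard⟩ :=
    stmt_4_general hXtree.isAcyclic hXreg hYtree hYdeg hY'tree.connected hi
  refine ⟨fun α hα => ?_, fun α α' hα hα' => (hcard α hα).trans (hcard α' hα').symm⟩
  rw [← hcard α hα] at hN
  exact ⟨Set.finite_of_ncard_ne_zero hN, Set.nonempty_of_ncard_ne_zero hN⟩
end

section
/- Fix an integer d ≥ 1 and let X be a d-regular tree. Let Y be a finite nonempty tree all of whose vertices have degree at most d. Then for any two vertices y, y' of Y and any two vertices o, o' of X, the number of isometric embeddings β : Y → X with β(y) = o equals the number of isometric embeddings β : Y → X with β(y') = o' (and both are finite and positive). -/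
/-!
A locally injective homomorphism from a connected graph into a forest maps paths to walks without
backtracking, that is, to paths; hence it is the same thing as an isometric embedding. Local
injectivity is easy to count: when a leaf is attached to a vertex `p` of `Y`, its image can be any
of the `d - deg p` neighbours of the image of `p` that are not yet in use. By induction, the number
`N` of locally injective homomorphisms from `Y` to a `d`-regular graph with `β y = o` satisfies
`N * d ^ |V| = d * ∏ v, d (d - 1) ⋯ (d - deg v + 1)`, and `y` and `o` do not appear on the right.
-/

open SimpleGraph Set

/-- A locally injective graph homomorphism (a graph immersion in the sense of Stallings): adjacency
is preserved and the neighbours of each vertex have distinct images. It is a predicate on the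
underlying vertex map, like `IsIsomEmb`. -/
structure IsLocallyInjectiveHom {V W : Type*} (G : SimpleGraph V) (H : SimpleGraph W)
    (f : V → W) : Prop where
  map_adj : ∀ ⦃u v⦄, G.Adj u v → H.Adj (f u) (f v)
  injOn_neighborSet : ∀ v, (G.neighborSet v).InjOn f

section Isometry

variable {V W : Type*} {G : SimpleGraph V} {H : SimpleGraph W} {f : V → W}

theorem IsLocallyInjectiveHom.isChain_edges_map {φ : G →g H} (hφ : IsLocallyInjectiveHom G H φ)
    {u v : V} (p : G.Walk u v) (hp : p.edges.IsChain (· ≠ ·)) :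
    (p.map φ).edges.IsChain (· ≠ ·) := by
  rw [Walk.edges_map, List.isChain_map]
  induction p with
  | nil => exact .nil
  | @cons u v w huv q ih =>
    cases q with
    | nil => exact .singleton _
    | @cons v x w hvx q =>
      simp only [Walk.edges_cons, List.isChain_cons_cons] at hp ih ⊢
      refine ⟨fun hedge => hp.1 ?_, ih hp.2⟩
      have hux : φ u = φ x := by
        rwa [Sym2.map_mk, Sym2.map_mk, Sym2.eq_swap, Sym2.congr_right] at hedge
      rw [hφ.injOn_neighborSet v huv.symm hvx hux, Sym2.eq_swap]

theorem length_eq_dist_of_isAcyclic (hG : G.IsAcyclic) {u v : V} {p : G.Walk u v}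
    (hp : p.IsPath) : p.length = G.dist u v := by
  obtain ⟨q, hq, hqlen⟩ := p.reachable.exists_path_of_dist
  have hpq : (⟨p, hp⟩ : G.Path u v) = ⟨q, hq⟩ := (hG.subsingleton_path u v).elim _ _
  rw [← hqlen, Subtype.mk.inj hpq]

theorem IsLocallyInjectiveHom.dist_eq (hf : IsLocallyInjectiveHom G H f) (hG : G.Connected)
    (hH : H.IsAcyclic) (u v : V) : H.dist (f u) (f v) = G.dist u v := by
  obtain ⟨p, hp, hlen⟩ := hG.exists_path_of_dist u v
  let φ : G →g H := ⟨f, fun h => hf.map_adj h⟩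
  have hchain : (p.map φ).edges.IsChain (· ≠ ·) :=
    hf.isChain_edges_map (φ := φ) p hp.isTrail.edges_nodup.isChain
  have hpath : (p.map φ).IsPath := (hH.isPath_iff_isChain _).2 hchain
  calc H.dist (f u) (f v) = (p.map φ).length := (length_eq_dist_of_isAcyclic hH hpath).symm
    _ = G.dist u v := by rw [Walk.length_map, hlen]

theorem IsIsomEmb.isLocallyInjectiveHom (hf : IsIsomEmb G H f) : IsLocallyInjectiveHom G H f where
  map_adj u v huv := by rwa [← dist_eq_one_iff_adj, hf.2, dist_eq_one_iff_adj]
  injOn_neighborSet _ := hf.1.injOn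

theorem isIsomEmb_iff_isLocallyInjectiveHom (hG : G.Connected) (hH : H.IsAcyclic) :
    IsIsomEmb G H f ↔ IsLocallyInjectiveHom G H f := by
  refine ⟨IsIsomEmb.isLocallyInjectiveHom, fun hf => ⟨fun u v huv => ?_, hf.dist_eq hG hH⟩⟩
  rw [← hG.dist_eq_zero_iff, ← hf.dist_eq hG hH, huv, dist_self]

end Isometry

section Cardinality

theorem ncard_setOf_mem_and_mem {α β : Type*} {s : Set α} {t : α → Set β} {k : ℕ}
    (hfin : ∀ a ∈ s, (t a).Finite) (hcard : ∀ a ∈ s, (t a).ncard = k) :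
    {x : α × β | x.1 ∈ s ∧ x.2 ∈ t x.1}.ncard = s.ncard * k := by
  have e (a : s) : t a ≃ Fin k :=
    have := (hfin a a.2).to_subtype
    Finite.equivFinOfCardEq (hcard a a.2)
  let split : {x : α × β | x.1 ∈ s ∧ x.2 ∈ t x.1} ≃ Σ a : s, t a :=
    { toFun := fun x => ⟨⟨x.1.1, x.2.1⟩, x.1.2, x.2.2⟩
      invFun := fun x => ⟨(x.1, x.2), x.1.2, x.2.2⟩ }
  rw [← Nat.card_coe_set_eq, ← Nat.card_coe_set_eq, ← Nat.card_fin k, ← Nat.card_prod]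
  exact Nat.card_congr (split.trans (Equiv.sigmaEquivProdOfEquiv e))

theorem ncard_neighborSet {V : Type*} (G : SimpleGraph V) (v : V) [Fintype (G.neighborSet v)] :
    (G.neighborSet v).ncard = G.degree v := by
  rw [ncard_eq_toFinset_card', ← neighborFinset_def, card_neighborFinset_eq_degree]

end Cardinality

section Leaf

variable {V W : Type*} {Y : SimpleGraph V} {l : V} {p : ({l}ᶜ : Set V)}

theorem IsLocallyInjectiveHom.domRestrict {X : SimpleGraph W} {β : V → W}
    (hβ : IsLocallyInjectiveHom Y X β) (s : Set V) :
    IsLocallyInjectiveHom (Y.induce s) X (s.domRestrict β) where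
  map_adj _ _ huv := hβ.map_adj huv
  injOn_neighborSet v _ ha _ hb hab := Subtype.ext (hβ.injOn_neighborSet v ha hb hab)

theorem isLocallyInjectiveHom_of_domRestrict {X : SimpleGraph W} {β : V → W}
    (hl : Y.neighborSet l = {p.1})
    (hβ : IsLocallyInjectiveHom (Y.induce {l}ᶜ) X (domRestrict {l}ᶜ β))
    (hpl : X.Adj (β p) (β l)) (hfresh : ∀ v ≠ l, Y.Adj p v → β v ≠ β l) :
    IsLocallyInjectiveHom Y X β where
  map_adj u v huv := by
    have hadj (v : V) (hv : Y.Adj l v) : v = p := hl.le hv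
    by_cases hu : u = l
    · subst hu
      exact hadj v huv ▸ hpl.symm
    by_cases hv : v = l
    · subst hv
      exact hadj u huv.symm ▸ hpl
    exact hβ.map_adj (u := ⟨u, hu⟩) (v := ⟨v, hv⟩) huv
  injOn_neighborSet v a hva b hvb hab := by
    have hadj (v : V) (hv : Y.Adj l v) : v = p := hl.le hv
    rw [mem_neighborSet] at hva hvb
    by_cases hv : v = l
    · subst hv
      rw [hadj a hva, hadj b hvb]
    by_cases ha : a = l <;> by_cases hb : b = l
    · rw [ha, hb]
    · subst ha
      obtain rfl := hadj v hva.symm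
      exact absurd hab.symm (hfresh b hb hvb)
    · subst hb
      obtain rfl := hadj v hvb.symm
      exact absurd hab (hfresh a ha hva)
    · have hinj := hβ.injOn_neighborSet ⟨v, hv⟩
      exact congrArg Subtype.val (@hinj ⟨a, ha⟩ hva ⟨b, hb⟩ hvb hab)

theorem isLocallyInjectiveHom_iff_domRestrict {X : SimpleGraph W} {β : V → W}
    (hl : Y.neighborSet l = {p.1}) :
    IsLocallyInjectiveHom Y X β ↔
      IsLocallyInjectiveHom (Y.induce {l}ᶜ) X (domRestrict {l}ᶜ β) ∧
        β l ∈ X.neighborSet (β p) \ domRestrict {l}ᶜ β '' (Y.induce {l}ᶜ).neighborSet p := by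
  have hpl : Y.Adj p l := Adj.symm (hl.ge rfl)
  constructor
  · refine fun hβ => ⟨hβ.domRestrict _, hβ.map_adj hpl, ?_⟩
    rintro ⟨v, hpv, hvl⟩
    exact v.2 (hβ.injOn_neighborSet p hpv hpl hvl)
  · rintro ⟨hβ, hadj, hfresh⟩
    exact isLocallyInjectiveHom_of_domRestrict hl hβ hadj
      fun v hvl hpv hv => hfresh ⟨⟨v, hvl⟩, hpv, hv⟩

theorem ncard_isLocallyInjectiveHom_of_leaf {X : SimpleGraph W} [X.LocallyFinite] {d : ℕ}
    (hX : X.IsRegularOfDegree d) (hl : Y.neighborSet l = {p.1})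
    [Fintype ((Y.induce {l}ᶜ).neighborSet p)] (y : ({l}ᶜ : Set V)) (o : W) :
    {β | IsLocallyInjectiveHom Y X β ∧ β y = o}.ncard =
      {γ | IsLocallyInjectiveHom (Y.induce {l}ᶜ) X γ ∧ γ y = o}.ncard *
        (d - (Y.induce {l}ᶜ).degree p) := by
  classical
  let extensions (γ : ({l}ᶜ : Set V) → W) : Set W :=
    X.neighborSet (γ p) \ γ '' (Y.induce {l}ᶜ).neighborSet p
  let restrictions : Set (({l}ᶜ : Set V) → W) :=
    {γ | IsLocallyInjectiveHom (Y.induce {l}ᶜ) X γ ∧ γ y = o}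
  have hcard : ∀ γ ∈ restrictions, (extensions γ).ncard = d - (Y.induce {l}ᶜ).degree p := by
    intro γ hγ
    rw [ncard_sdiff, (hγ.1.injOn_neighborSet p).ncard_image, ncard_neighborSet,
      ncard_neighborSet, hX.degree_eq]
    exact image_subset_iff.2 fun v hv => hγ.1.map_adj hv
  rw [← ncard_setOf_mem_and_mem (fun γ _ => toFinite (extensions γ)) hcard]
  let split : (V → W) ≃ (({l}ᶜ : Set V) → W) × W := (Equiv.funSplitAt l W).trans (.prodComm _ _)
  refine Nat.card_congr (split.subtypeEquiv fun β => ?_)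
  exact (and_congr_left' (isLocallyInjectiveHom_iff_domRestrict hl)).trans and_right_comm

theorem degree_eq_degree_induce_compl_add_one (hl : Y.Adj p l) [Fintype (Y.neighborSet p)]
    [Fintype ((Y.induce {l}ᶜ).neighborSet p)] :
    Y.degree p = (Y.induce {l}ᶜ).degree p + 1 := by
  have himage : Subtype.val '' (Y.induce {l}ᶜ).neighborSet p = Y.neighborSet p \ {l} := by
    ext v
    simp [and_comm]
  rw [← ncard_neighborSet, ← ncard_neighborSet,
    ← ncard_image_of_injective _ Subtype.val_injective, himage,
    ncard_sdiff_singleton_add_one (s := Y.neighborSet p) hl (toFinite _)]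

theorem prod_descFactorial_degree_of_leaf [Fintype V] [Fintype ({l}ᶜ : Set V)]
    [Y.LocallyFinite] [(Y.induce {l}ᶜ).LocallyFinite] (hl : Y.neighborSet l = {p.1}) (d : ℕ) :
    ∏ v, d.descFactorial (Y.degree v) =
      d * (d - (Y.induce {l}ᶜ).degree p) * ∏ v, d.descFactorial ((Y.induce {l}ᶜ).degree v) := by
  classical
  have hdeg_l : Y.degree l = 1 := by rw [← ncard_neighborSet, hl, ncard_singleton]
  have hdeg_p : Y.degree p = (Y.induce {l}ᶜ).degree p + 1 :=
    degree_eq_degree_induce_compl_add_one (Adj.symm (hl.ge rfl : Y.Adj l p))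
  have hdeg (v : ({l}ᶜ : Set V)) (hv : v ≠ p) : (Y.induce {l}ᶜ).degree v = Y.degree v := by
    have hsub : Y.neighborSet v ⊆ {l}ᶜ := by
      rintro _ hvl rfl
      exact hv (Subtype.ext (hl.le (Adj.symm hvl)))
    convert degree_induce_of_neighborSet_subset hsub
  have hrest : ∏ v ∈ {p}ᶜ, d.descFactorial (Y.degree v) =
      ∏ v ∈ {p}ᶜ, d.descFactorial ((Y.induce {l}ᶜ).degree v) :=
    Finset.prod_congr rfl fun v hv => by rw [hdeg v (by simpa using hv)]
  calc ∏ v, d.descFactorial (Y.degree v)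
      = d * ∏ v : ({l}ᶜ : Set V), d.descFactorial (Y.degree v) := by
        rw [Fintype.prod_eq_mul_prod_compl l, hdeg_l, Nat.descFactorial_one]
        congr 1
        exact Finset.prod_subtype _ (by simp) _
    _ = d * (d - (Y.induce {l}ᶜ).degree p) *
        ∏ v, d.descFactorial ((Y.induce {l}ᶜ).degree v) := by
        rw [Fintype.prod_eq_mul_prod_compl p, Fintype.prod_eq_mul_prod_compl p, hdeg_p,
          Nat.descFactorial_succ, hrest]
        ring

end Leaf

section Counting

variable {V W : Type*} {X : SimpleGraph W} {Y : SimpleGraph V}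

theorem ncard_isLocallyInjectiveHom_of_subsingleton [Subsingleton V] (y : V) (o : W) :
    {β | IsLocallyInjectiveHom Y X β ∧ β y = o}.ncard = 1 := by
  refine ncard_eq_one.2 ⟨fun _ => o, eq_singleton_iff_unique_mem.2 ⟨⟨⟨?_, ?_⟩, rfl⟩, ?_⟩⟩
  · exact fun u v huv => absurd (Subsingleton.elim u v) huv.ne
  · exact fun v => injOn_of_subsingleton _ _
  · rintro β ⟨-, hβ⟩
    exact funext fun v => by rw [Subsingleton.elim v y, hβ]

theorem exists_neighborSet_eq_singleton_and_ne [Finite V] [Nontrivial V] (hY : Y.IsTree) (y : V) :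
    ∃ l p, Y.neighborSet l = {p} ∧ l ≠ y := by
  have := Fintype.ofFinite V
  classical
  obtain ⟨l₁, l₂, hne, hdeg₁, hdeg₂⟩ := hY.exists_ne_and_degree_eq_one
  rw [← ncard_neighborSet, ncard_eq_one] at hdeg₁ hdeg₂
  obtain ⟨p₁, hp₁⟩ := hdeg₁
  obtain ⟨p₂, hp₂⟩ := hdeg₂
  by_cases hy : l₁ = y
  · exact ⟨l₂, p₂, hp₂, hy ▸ hne.symm⟩
  · exact ⟨l₁, p₁, hp₁, hy⟩

theorem isTree_induce_compl_of_leaf {l p : V} (hY : Y.IsTree) (hl : Y.neighborSet l = {p}) :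
    (Y.induce {l}ᶜ).IsTree := by
  have : Fintype (Y.neighborSet l) := ((finite_singleton p).subset hl.subset).fintype
  have hdeg : Y.degree l = 1 := by rw [← ncard_neighborSet, hl, ncard_singleton]
  exact ⟨hY.connected.induce_compl_singleton_of_degree_eq_one hdeg, hY.isAcyclic.induce _⟩

-- The direct count `d * ∏ v, (d - 1).descFactorial (deg v - 1)` is wrong for a single vertex;
-- multiplying the factor of each vertex by `d` removes the exception.
theorem ncard_isLocallyInjectiveHom_mul_pow [Fintype V] [Y.LocallyFinite] [X.LocallyFinite] {d : ℕ}
    (hX : X.IsRegularOfDegree d) (hY : Y.IsTree) (y : V) (o : W) :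
    {β | IsLocallyInjectiveHom Y X β ∧ β y = o}.ncard * d ^ Fintype.card V =
      d * ∏ v, d.descFactorial (Y.degree v) := by
  induction hn : Fintype.card V generalizing V with
  | zero => exact absurd hn (Fintype.card_pos_iff.2 ⟨y⟩).ne'
  | succ n ih =>
    classical
    cases subsingleton_or_nontrivial V with
    | inl _ =>
      have hn' : n + 1 = 1 := hn ▸ Fintype.card_eq_one_iff.2 ⟨y, fun v => Subsingleton.elim v y⟩
      simp [ncard_isLocallyInjectiveHom_of_subsingleton, hn']
    | inr _ =>
      obtain ⟨l, p, hl, hly⟩ := exists_neighborSet_eq_singleton_and_ne hY y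
      have hlp : Y.Adj l p := hl.ge rfl
      lift p to ({l}ᶜ : Set V) using hlp.ne'
      lift y to ({l}ᶜ : Set V) using hly.symm
      have hcard : Fintype.card ({l}ᶜ : Set V) = n := by
        rw [Fintype.card_compl_set, hn, Set.card_singleton, Nat.add_sub_cancel]
      have hrec := ih (isTree_induce_compl_of_leaf hY hl) y hcard
      rw [ncard_isLocallyInjectiveHom_of_leaf hX hl, prod_descFactorial_degree_of_leaf hl, pow_succ]
      linear_combination d * (d - (Y.induce {l}ᶜ).degree p) * hrec

end Counting

theorem ncard_isIsomEmb_mul_pow {V W : Type*} [Fintype V] {Y : SimpleGraph V} [Y.LocallyFinite]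
    {X : SimpleGraph W} [X.LocallyFinite] {d : ℕ} (hXacyc : X.IsAcyclic)
    (hXreg : X.IsRegularOfDegree d) (hY : Y.IsTree) (y : V) (o : W) :
    {β | IsIsomEmb Y X β ∧ β y = o}.ncard * d ^ Fintype.card V =
      d * ∏ v, d.descFactorial (Y.degree v) := by
  simp only [isIsomEmb_iff_isLocallyInjectiveHom hY.connected hXacyc]
  exact ncard_isLocallyInjectiveHom_mul_pow hXreg hY y o

theorem stmt_5_general {W VY : Type*} (d : ℕ) (hd : 1 ≤ d)
    (X : SimpleGraph W) (hXacyc : X.IsAcyclic) [X.LocallyFinite] (hXreg : X.IsRegularOfDegree d)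
    [Finite VY] (Y : SimpleGraph VY) (hYtree : Y.IsTree) [Y.LocallyFinite]
    (hYdeg : ∀ v : VY, Y.degree v ≤ d) (y y' : VY) (o o' : W) :
    ({β : VY → W | IsIsomEmb Y X β ∧ β y = o}.Finite ∧
      {β : VY → W | IsIsomEmb Y X β ∧ β y = o}.Nonempty) ∧
    ({β : VY → W | IsIsomEmb Y X β ∧ β y' = o'}.Finite ∧
      {β : VY → W | IsIsomEmb Y X β ∧ β y' = o'}.Nonempty) ∧
    {β : VY → W | IsIsomEmb Y X β ∧ β y = o}.ncard =
      {β : VY → W | IsIsomEmb Y X β ∧ β y' = o'}.ncard := by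
  have := Fintype.ofFinite VY
  have hcount := ncard_isIsomEmb_mul_pow hXacyc hXreg hYtree
  have hpos (z : VY) (w : W) : 0 < {β | IsIsomEmb Y X β ∧ β z = w}.ncard := by
    refine Nat.pos_of_mul_pos_right (b := d ^ Fintype.card VY) ?_
    rw [hcount]
    exact Nat.mul_pos hd (Finset.prod_pos fun v _ => Nat.descFactorial_pos.2 (hYdeg v))
  have hfin (z : VY) (w : W) := finite_of_ncard_pos (hpos z w)
  have hne (z : VY) (w : W) := nonempty_of_ncard_ne_zero (hpos z w).ne'
  refine ⟨⟨hfin y o, hne y o⟩, ⟨hfin y' o', hne y' o'⟩, ?_⟩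
  exact Nat.eq_of_mul_eq_mul_right (Nat.pow_pos hd) ((hcount y o).trans (hcount y' o').symm)

/-- In a `d`-regular tree `X`, for a finite nonempty tree `Y` of max degree `≤ d`,
the number of isometric embeddings `β : Y → X` with `β y = o` is finite, positive, and
independent of the choice of the vertex `y` of `Y` and of the vertex `o` of `X`. -/
theorem stmt_5 {W VY : Type*} (d : ℕ) (hd : 1 ≤ d)
    (X : SimpleGraph W) (hXtree : X.IsTree) [X.LocallyFinite]
    (hXreg : X.IsRegularOfDegree d)
    [Fintype VY] [Nonempty VY] (Y : SimpleGraph VY) (hYtree : Y.IsTree)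
    [Y.LocallyFinite] (hYdeg : ∀ v : VY, Y.degree v ≤ d)
    (y y' : VY) (o o' : W) :
    ({β : VY → W | IsIsomEmb Y X β ∧ β y = o}.Finite ∧
      {β : VY → W | IsIsomEmb Y X β ∧ β y = o}.Nonempty) ∧
    ({β : VY → W | IsIsomEmb Y X β ∧ β y' = o'}.Finite ∧
      {β : VY → W | IsIsomEmb Y X β ∧ β y' = o'}.Nonempty) ∧
    {β : VY → W | IsIsomEmb Y X β ∧ β y = o}.ncard =
      {β : VY → W | IsIsomEmb Y X β ∧ β y' = o'}.ncard :=
  stmt_5_general d hd X hXtree.isAcyclic hXreg Y hYtree hYdeg y y' o o'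
end
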